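/- arXiv:2205.07777 — 2 statements merged into one kernel-verified Lean document; each statement's English description precedes it below -/
import Mathlib

section
/- For every blocker x ∈ T and every blocking area b_x of x, there exists a continuous path π : [0,1] → F with π(0) = x and π(1) ∈ b_x whose image is contained in D₂(x), and whose image is disjoint from every blocking area b_y of every blocker y ∈ T with y ≠ x. -/
open Metric Set

noncomputable section

/-- The Euclidean plane ℝ². -/
abbrev Plane : Type := EuclideanSpace ℝ (Fin 2)

/-- A simple polygon, given by a simple (injective) closed polygonal curve in the plane. -/
structure SimplePolygon where
  /-- the parametrization of the boundary curve over `[0,1]` -/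
  toFun : ℝ → Plane
  continuous : Continuous toFun
  closed : toFun 0 = toFun 1
  injOn : Set.InjOn toFun (Set.Ico (0 : ℝ) 1)
  /-- the curve is polygonal: it is affine on each piece of some finite partition of `[0,1]` -/
  polygonal : ∃ (n : ℕ) (t : Fin (n + 1) → ℝ),
    t 0 = 0 ∧ t (Fin.last n) = 1 ∧ StrictMono t ∧
    ∀ i : Fin n, ∀ s ∈ Set.Icc (t i.castSucc) (t i.succ),
      toFun s = toFun (t i.castSucc) +
        ((s - t i.castSucc) / (t i.succ - t i.castSucc)) •
          (toFun (t i.succ) - toFun (t i.castSucc))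

/-- The boundary curve of a simple polygon, as a subset of the plane. -/
def SimplePolygon.bdryCurve (P : SimplePolygon) : Set Plane :=
  P.toFun '' Set.Icc 0 1

/-- The closed region bounded by a simple polygon: the union of the boundary curve with
the bounded connected components of its complement. -/
def SimplePolygon.region (P : SimplePolygon) : Set Plane :=
  P.bdryCurve ∪
    {x | x ∉ P.bdryCurve ∧ Bornology.IsBounded (connectedComponentIn P.bdryCurveᶜ x)}

/-- The free space of a simple polygon: all positions whose open unit disc lies in the region. -/
def SimplePolygon.freeSpace (P : SimplePolygon) : Set Plane :=
  {x | Metric.ball x 1 ⊆ P.region}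

/-- `D₂⁻(t)`: the part of the free space `F` inside the aura of the target `t`, minus the
auras of the start positions in `S`. -/
def minusAura (F S : Set Plane) (t : Plane) : Set Plane :=
  (Metric.ball t 2 ∩ F) \ ⋃ s ∈ S, Metric.ball s 2

/-- A remote component of a target `t`: a connected component of `D₂⁻(t)` not containing `t`. -/
def RemoteComponent (F S : Set Plane) (t : Plane) (b : Set Plane) : Prop :=
  (∃ p ∈ minusAura F S t, b = connectedComponentIn (minusAura F S t) p) ∧ t ∉ b

/-- A blocking area of a target `t`: a remote component `b` of `t` such that `F \ b` is
disconnected. A target having a blocking area is called a blocker. -/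
def BlockingArea (F S : Set Plane) (t : Plane) (b : Set Plane) : Prop :=
  RemoteComponent F S t b ∧ ¬ IsPreconnected (F \ b)

/-- The union of all remote components of all targets in `T`. -/
def remoteUnion (F S T : Set Plane) : Set Plane :=
  {x | ∃ t ∈ T, ∃ b : Set Plane, RemoteComponent F S t b ∧ x ∈ b}

/-! ### Continuous logarithms and a crossing lemma in the complex plane -/

/-- If `U` is open and preconnected, then `(z - p) / (z - q)` has a continuous logarithm on the
complement of `U`, for any two points `p, q` of `U`. -/
lemma exists_continuousOn_log_div {U : Set ℂ} (hU : IsOpen U) (hUc : IsPreconnected U)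
    {p q : ℂ} (hp : p ∈ U) (hq : q ∈ U) :
    ∃ L : ℂ → ℂ, ContinuousOn L Uᶜ ∧ ∀ z ∈ Uᶜ, Complex.exp (L z) = (z - p) / (z - q) := by
  have hne : ∀ c ∈ U, ∀ z ∈ Uᶜ, z - c ≠ 0 := by
    intro c hc z hz h
    exact hz (sub_eq_zero.1 h ▸ hc)
  refine hUc.induction₂' (fun p q => ∃ L : ℂ → ℂ, ContinuousOn L Uᶜ ∧
    ∀ z ∈ Uᶜ, Complex.exp (L z) = (z - p) / (z - q)) ?_ ?_ hp hq
  · intro c hc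
    obtain ⟨r, hr, hball⟩ := Metric.isOpen_iff.1 hU c hc
    have key : ∀ d ∈ ball c (r / 2), ∀ z ∈ Uᶜ, (z - c) / (z - d) ∈ Complex.slitPlane := by
      intro d hd z hz
      have hdU : d ∈ U := hball (ball_subset_ball (by linarith) hd)
      have hzc : r ≤ dist z c := by
        by_contra h
        exact hz (hball (by simpa using h))
      rw [mem_ball] at hd
      have hzd : dist d c < dist z d := by
        have := dist_triangle z d c
        linarith
      have hz0 := hne d hdU z hz
      have hlt : ‖(d - c) / (z - d)‖ < 1 := by
        rw [norm_div, div_lt_one (norm_pos_iff.2 hz0), ← dist_eq_norm, ← dist_eq_norm]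
        exact hzd
      have heq : (z - c) / (z - d) = 1 + (d - c) / (z - d) := by
        field_simp
        ring
      rw [heq]
      exact Complex.mem_slitPlane_of_norm_lt_one hlt
    filter_upwards [mem_nhdsWithin_of_mem_nhds (ball_mem_nhds c (half_pos hr)),
      self_mem_nhdsWithin] with d hd hdU
    have hcont : ContinuousOn (fun z => Complex.log ((z - c) / (z - d))) Uᶜ := by
      refine ContinuousOn.clog (ContinuousOn.div (by fun_prop) (by fun_prop) ?_) (key d hd)
      exact hne d hdU
    have hexp : ∀ z ∈ Uᶜ, Complex.exp (Complex.log ((z - c) / (z - d))) = (z - c) / (z - d) :=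
      fun z hz => Complex.exp_log (div_ne_zero (hne c hc z hz) (hne d hdU z hz))
    refine ⟨⟨_, hcont, hexp⟩, _, hcont.neg, fun z hz => ?_⟩
    rw [Pi.neg_apply, Complex.exp_neg, hexp z hz, inv_div]
  · rintro c d e hc hd he ⟨L, hL, hL'⟩ ⟨M, hM, hM'⟩
    refine ⟨_, hL.add hM, fun z hz => ?_⟩
    rw [Pi.add_apply, Complex.exp_add, hL' z hz, hM' z hz, div_mul_div_cancel₀ (hne d hd z hz)]

/-- Two continuous logarithms of the same function on a preconnected set differ by a constant. -/
lemma sub_eq_sub_of_exp_eq {K : Set ℂ} (hK : IsPreconnected K) {L M : ℂ → ℂ}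
    (hL : ContinuousOn L K) (hM : ContinuousOn M K)
    (h : ∀ z ∈ K, Complex.exp (L z) = Complex.exp (M z)) {x v : ℂ} (hx : x ∈ K) (hv : v ∈ K) :
    L v - M v = L x - M x := by
  have hexp : Complex.exp (L x - M x) = 1 := by
    rw [Complex.exp_sub, h x hx, div_self (Complex.exp_ne_zero _)]
  have := Complex.isCoveringMap_exp.eqOn_of_comp_eqOn hK hL
    (hM.add (continuousOn_const (c := L x - M x)))
    (fun z hz => by
      apply Subtype.ext
      simp only [Function.comp_apply, Pi.add_apply, Complex.exp_add, h z hz, hexp, mul_one]) hx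
    (by simp) hv
  rw [this]
  simp

/-- Off the segment from `p` to `w`, the quotient `(z - p) / (z - w)` avoids the branch cut of
the principal logarithm. -/
lemma sub_div_sub_mem_slitPlane {p w z : ℂ} (hz : z ∉ segment ℝ p w) :
    (z - p) / (z - w) ∈ Complex.slitPlane := by
  have hzw : z - w ≠ 0 := fun h => hz (sub_eq_zero.1 h ▸ right_mem_segment ℝ p w)
  by_contra hcon
  rw [Complex.mem_slitPlane_iff_not_le_zero, not_not] at hcon
  obtain ⟨hre, him⟩ := Complex.le_def.1 hcon
  set r : ℝ := -((z - p) / (z - w)).re with hr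
  have hr0 : 0 ≤ r := by simpa [hr] using hre
  have heq : (z - p) / (z - w) = -(r : ℂ) := by
    apply Complex.ext
    · simp [hr]
    · simpa using him
  rw [div_eq_iff hzw] at heq
  apply hz
  have h1 : (0 : ℝ) < 1 + r := by linarith
  have h1' : (1 + r : ℂ) ≠ 0 := by exact_mod_cast h1.ne'
  refine ⟨1 / (1 + r), r / (1 + r), by positivity, by positivity, by field_simp, ?_⟩
  simp only [Complex.real_smul]
  push_cast
  field_simp
  linear_combination (-1 : ℂ) * heq

lemma exists_int_arg_div {u w : ℂ} (hu : u ≠ 0) (hw : w ≠ 0) :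
    ∃ n : ℤ, (u / w).arg = u.arg - w.arg + n * (2 * Real.pi) := by
  have : Complex.exp (Complex.log (u / w)) = Complex.exp (Complex.log u - Complex.log w) := by
    rw [Complex.exp_log (div_ne_zero hu hw), Complex.exp_sub, Complex.exp_log hu,
      Complex.exp_log hw]
  obtain ⟨n, hn⟩ := Complex.exp_eq_exp_iff_exists_int.1 this
  refine ⟨n, ?_⟩
  simpa [Complex.log_im] using congrArg Complex.im hn

lemma arg_div_eq_sub {u w : ℂ} (hu : u ≠ 0) (hw : w ≠ 0) (h1 : -Real.pi < u.arg - w.arg)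
    (h2 : u.arg - w.arg < Real.pi) : (u / w).arg = u.arg - w.arg := by
  obtain ⟨n, hn⟩ := exists_int_arg_div hu hw
  have h3 := Complex.neg_pi_lt_arg (u / w)
  have h4 := Complex.arg_le_pi (u / w)
  have hpi := Real.pi_pos
  have h5 : (n : ℝ) < 1 := by nlinarith
  have h6 : (-1 : ℝ) < n := by nlinarith
  have : n = 0 := by
    have h5' : n < 1 := by exact_mod_cast h5
    have h6' : -1 < n := by exact_mod_cast h6
    omega
  rw [hn, this]
  simp

lemma arg_div_eq_sub_add_two_pi {u w : ℂ} (hu : u ≠ 0) (hw : w ≠ 0)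
    (h : u.arg - w.arg < -Real.pi) : (u / w).arg = u.arg - w.arg + 2 * Real.pi := by
  obtain ⟨n, hn⟩ := exists_int_arg_div hu hw
  have h3 := Complex.neg_pi_lt_arg (u / w)
  have h4 := Complex.arg_le_pi (u / w)
  have h7 := Complex.neg_pi_lt_arg u
  have h8 := Complex.arg_le_pi w
  have hpi := Real.pi_pos
  have h5 : (n : ℝ) < 2 := by nlinarith
  have h6 : (0 : ℝ) < n := by nlinarith
  have : n = 1 := by
    have h5' : n < 2 := by exact_mod_cast h5
    have h6' : 0 < n := by exact_mod_cast h6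
    omega
  rw [hn, this]
  simp

/-- A connected set `F` containing both endpoints of the real segment `[-a, a]` must meet any
polyline `p w q` that crosses this segment once and whose endpoints lie in a connected open set
`U` disjoint from both `F` and the segment. -/
lemma false_of_crossing {U F : Set ℂ} (hU : IsOpen U) (hUc : IsPreconnected U)
    (hF : IsPreconnected F) (hFU : F ⊆ Uᶜ) {a : ℝ}
    (hseg : ∀ t ∈ Icc (-a) a, (t : ℂ) ∈ Uᶜ) (hx : ((-a : ℝ) : ℂ) ∈ F) (hv : ((a : ℝ) : ℂ) ∈ F)
    {p w q : ℂ} (hp : p ∈ U) (hq : q ∈ U) (hpim : 0 < p.im) (hwim : w.im ≤ 0) (hqim : q.im < 0)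
    (hpre : p.re ∈ Ioo (-a) a) (hwre : w.re ∈ Ioo (-a) a)
    (hpw : ∀ z ∈ F, z ∉ segment ℝ p w) (hwq : ∀ z ∈ F, z ∉ segment ℝ w q) : False := by
  obtain ⟨L, hLc, hL⟩ := exists_continuousOn_log_div hU hUc hp hq
  have haa : -a ≤ a := (hpre.1.trans hpre.2).le
  have hneU : ∀ c ∈ U, ∀ z ∈ Uᶜ, z - c ≠ 0 := by
    intro c hc z hz h
    exact hz (sub_eq_zero.1 h ▸ hc)
  have hnew : ∀ z ∈ F, z - w ≠ 0 := fun z hz h =>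
    hpw z hz (sub_eq_zero.1 h ▸ right_mem_segment ℝ p w)
  have hFconst := sub_eq_sub_of_exp_eq (M := fun z =>
      Complex.log ((z - p) / (z - w)) + Complex.log ((z - w) / (z - q))) hF (hLc.mono hFU)
    (by
      refine ContinuousOn.add (ContinuousOn.clog ?_ fun z hz =>
        sub_div_sub_mem_slitPlane (hpw z hz)) (ContinuousOn.clog ?_ fun z hz =>
        sub_div_sub_mem_slitPlane (hwq z hz))
      · exact ContinuousOn.div (by fun_prop) (by fun_prop) hnew
      · exact ContinuousOn.div (by fun_prop) (by fun_prop) fun z hz => hneU q hq z (hFU hz))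
    (fun z hz => by
      rw [hL z (hFU hz), Complex.exp_add,
        Complex.exp_log (div_ne_zero (hneU p hp z (hFU hz)) (hnew z hz)),
        Complex.exp_log (div_ne_zero (hnew z hz) (hneU q hq z (hFU hz))),
        div_mul_div_cancel₀ (hnew z hz)]) hx hv
  have hsegU : (fun t : ℝ => (t : ℂ)) '' Icc (-a) a ⊆ Uᶜ := by
    rintro _ ⟨t, ht, rfl⟩
    exact hseg t ht
  have hSconst := sub_eq_sub_of_exp_eq (M := fun z => Complex.log (z - p) - Complex.log (z - q))
    (isPreconnected_Icc.image _ Complex.continuous_ofReal.continuousOn) (hLc.mono hsegU)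
    (by
      refine ContinuousOn.sub (ContinuousOn.clog (by fun_prop) ?_)
        (ContinuousOn.clog (by fun_prop) ?_)
      · rintro _ ⟨t, -, rfl⟩
        exact Complex.mem_slitPlane_iff.2 (Or.inr (by simp [hpim.ne']))
      · rintro _ ⟨t, -, rfl⟩
        exact Complex.mem_slitPlane_iff.2 (Or.inr (by simp [hqim.ne])))
    (fun z hz => by
      rw [hL z (hsegU hz), Complex.exp_sub, Complex.exp_log (hneU p hp z (hsegU hz)),
        Complex.exp_log (hneU q hq z (hsegU hz))])
    (mem_image_of_mem _ (left_mem_Icc.2 haa)) (mem_image_of_mem _ (right_mem_Icc.2 haa))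
  have hFim := congrArg Complex.im hFconst
  have hSim := congrArg Complex.im hSconst
  simp only [Complex.sub_im, Complex.add_im, Complex.log_im] at hFim hSim
  have hq_arg : ∀ t : ℝ, 0 < ((t : ℂ) - q).arg ∧ ((t : ℂ) - q).arg < Real.pi := by
    intro t
    have him : 0 < ((t : ℂ) - q).im := by simpa using hqim
    refine ⟨lt_of_le_of_ne (Complex.arg_nonneg_iff.2 him.le) fun h => ?_,
      Complex.arg_lt_pi_iff.2 (Or.inr him.ne')⟩
    exact him.ne' (Complex.arg_eq_zero_iff.1 h.symm).2
  have hw_arg : ∀ t : ℝ, 0 ≤ ((t : ℂ) - w).arg ∧ ((t : ℂ) - w).arg ≤ Real.pi := fun t =>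
    ⟨Complex.arg_nonneg_iff.2 (by simpa using hwim), Complex.arg_le_pi _⟩
  have hp_arg : ∀ t : ℝ, ((t : ℂ) - p).arg < 0 := fun t =>
    Complex.arg_neg_iff.2 (by simpa using hpim)
  have hwq_arg : ∀ t : ℝ, (t : ℂ) ∈ F → (((t : ℂ) - w) / ((t : ℂ) - q)).arg =
      ((t : ℂ) - w).arg - ((t : ℂ) - q).arg := fun t ht =>
    arg_div_eq_sub (hnew t ht) (hneU q hq t (hFU ht))
      (by linarith [hw_arg t, hq_arg t]) (by linarith [hw_arg t, hq_arg t])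
  have hpv : -(Real.pi / 2) < ((a : ℂ) - p).arg :=
    Complex.neg_pi_div_two_lt_arg_iff.2 (Or.inl (by simpa using hpre.2))
  have hwv : ((a : ℂ) - w).arg < Real.pi / 2 :=
    Complex.arg_lt_pi_div_two_iff.2 (Or.inl (by simpa using hwre.2))
  have hpx : (((-a : ℝ) : ℂ) - p).arg < -(Real.pi / 2) := by
    rw [← not_le, Complex.neg_pi_div_two_le_arg_iff]
    simp only [Complex.sub_re, Complex.sub_im, Complex.ofReal_re, Complex.ofReal_im]
    rintro (h | h) <;> linarith [hpre.1]
  have hwx : Real.pi / 2 < (((-a : ℝ) : ℂ) - w).arg := by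
    rw [← not_le, Complex.arg_le_pi_div_two_iff]
    simp only [Complex.sub_re, Complex.sub_im, Complex.ofReal_re, Complex.ofReal_im]
    rintro (h | h) <;> linarith [hwre.1]
  have hpwv := arg_div_eq_sub (hneU p hp a (hFU hv)) (hnew a hv)
    (by linarith [hw_arg a]) (by linarith [hw_arg a, hp_arg a, Real.pi_pos])
  have hpwx := arg_div_eq_sub_add_two_pi (hneU p hp _ (hFU hx)) (hnew _ hx) (by linarith)
  rw [hwq_arg _ hx, hwq_arg _ hv, hpwv, hpwx] at hFim
  linarith [Real.pi_pos]

/-! ### Sliding a unit disc between two overlapping free positions -/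

/-- The points at distance at least one from every point of `U`. -/
def clearance {α : Type*} [PseudoMetricSpace α] (U : Set α) : Set α := {z | ∀ u ∈ U, 1 ≤ dist z u}

lemma one_le_dist_iff {z u : ℂ} :
    1 ≤ dist z u ↔ 1 ≤ (z.re - u.re) ^ 2 + (z.im - u.im) ^ 2 := by
  rw [Complex.dist_eq_re_im, Real.one_le_sqrt]

lemma dist_lt_one_iff {z u : ℂ} :
    dist z u < 1 ↔ (z.re - u.re) ^ 2 + (z.im - u.im) ^ 2 < 1 := by
  rw [← not_le, one_le_dist_iff, not_le]

/-- An open connected obstacle `U` with connected clearance, together with the two points `-a` and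
`a` of the clearance at distance less than two. -/
structure IsCorridor (U : Set ℂ) (a : ℝ) : Prop where
  isOpen : IsOpen U
  isPreconnected : IsPreconnected U
  isPreconnected_clearance : IsPreconnected (clearance U)
  pos : 0 < a
  lt_one : a < 1
  left_mem : ((-a : ℝ) : ℂ) ∈ clearance U
  right_mem : ((a : ℝ) : ℂ) ∈ clearance U

namespace IsCorridor

variable {U : Set ℂ} {a : ℝ}

lemma left_le (h : IsCorridor U a) {u : ℂ} (hu : u ∈ U) : 1 ≤ (u.re + a) ^ 2 + u.im ^ 2 := by
  have := one_le_dist_iff.1 (h.left_mem u hu)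
  simp only [Complex.ofReal_re, Complex.ofReal_im] at this
  linarith

lemma right_le (h : IsCorridor U a) {u : ℂ} (hu : u ∈ U) : 1 ≤ (u.re - a) ^ 2 + u.im ^ 2 := by
  have := one_le_dist_iff.1 (h.right_mem u hu)
  simp only [Complex.ofReal_re, Complex.ofReal_im] at this
  linarith

lemma one_le_sub_sq_of_im_eq_zero (h : IsCorridor U a) {u : ℂ} (hu : u ∈ U) (him : u.im = 0)
    {t : ℝ} (ht : t ∈ Icc (-a) a) : 1 ≤ (t - u.re) ^ 2 := by
  have h1 := h.left_le hu
  have h2 := h.right_le hu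
  rw [him] at h1 h2
  have h3 := h.pos
  have h4 := h.lt_one
  obtain ⟨h5, h6⟩ := ht
  have h1' : 1 ≤ |u.re + a| := by rw [← sq_le_sq₀ zero_le_one (abs_nonneg _), sq_abs]; linarith
  have h2' : 1 ≤ |u.re - a| := by rw [← sq_le_sq₀ zero_le_one (abs_nonneg _), sq_abs]; linarith
  rcases le_abs.1 h1' with h1' | h1' <;> rcases le_abs.1 h2' with h2' | h2' <;> nlinarith

lemma ofReal_notMem (h : IsCorridor U a) {t : ℝ} (ht : t ∈ Icc (-a) a) : (t : ℂ) ∈ Uᶜ := by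
  intro hU
  have := h.one_le_sub_sq_of_im_eq_zero hU (by simp) ht
  norm_num at this

/-- No point on or below the axis is close to obstacle points on both sides of the corridor. -/
lemma not_lt_and_lt (h : IsCorridor U a) {p q : ℂ} (hp : p ∈ U) (hq : q ∈ U) (hpim : 0 < p.im)
    (hqim : q.im ≤ 0) {t c : ℝ} (ht : t ∈ Icc (-a) a) (hc : c ≤ 0)
    (hpd : (t - p.re) ^ 2 + (c - p.im) ^ 2 < 1) (hqd : (t - q.re) ^ 2 + (c - q.im) ^ 2 < 1) :
    False := by
  have hq0 : q.im < 0 := lt_of_le_of_ne hqim fun h0 => by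
    nlinarith [h.one_le_sub_sq_of_im_eq_zero hq h0 ht, sq_nonneg (c - q.im)]
  have hp0 : (t - p.re) ^ 2 + p.im ^ 2 < 1 := by nlinarith
  have hl := h.left_le hp
  have hr := h.right_le hp
  obtain ⟨ht1, ht2⟩ := ht
  have hp1 : -a < p.re := by nlinarith
  have hp2 : p.re < a := by nlinarith
  have ht1' : -a < t := lt_of_le_of_ne ht1 (by rintro rfl; nlinarith)
  have ht2' : t < a := lt_of_le_of_ne ht2 (by rintro rfl; nlinarith)
  have hnear : ∀ u ∈ U, dist (⟨t, c⟩ : ℂ) u < 1 →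
      ∀ z ∈ clearance U, z ∉ segment ℝ u ⟨t, c⟩ := by
    intro u hu hd z hz hzs
    have hsub : segment ℝ u ⟨t, c⟩ ⊆ ball u 1 :=
      (convex_ball u 1).segment_subset (mem_ball_self one_pos) hd
    exact (hz u hu).not_gt (hsub hzs)
  refine false_of_crossing h.isOpen h.isPreconnected h.isPreconnected_clearance
    (fun z hz hzU => ?_) (fun t ht => h.ofReal_notMem ht) h.left_mem h.right_mem (w := ⟨t, c⟩)
    hp hq hpim hc hq0 ⟨hp1, hp2⟩ ⟨ht1', ht2'⟩ (hnear p hp (dist_lt_one_iff.2 hpd)) ?_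
  · have := hz z hzU
    norm_num at this
  · intro z hz
    rw [segment_symm]
    exact hnear q hq (dist_lt_one_iff.2 hqd) z hz

lemma conj (h : IsCorridor U a) : IsCorridor (starRingEnd ℂ ⁻¹' U) a := by
  have hcl : clearance (starRingEnd ℂ ⁻¹' U) = starRingEnd ℂ ⁻¹' clearance U := by
    ext z
    refine ⟨fun hz u hu => ?_, fun hz u hu => ?_⟩
    · rw [Complex.dist_conj_comm]
      exact hz _ (by simpa using hu)
    · rw [← Complex.dist_conj_conj]
      exact hz _ hu
  refine ⟨h.isOpen.preimage Complex.continuous_conj,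
    (Complex.conjLIE.toHomeomorph.isPreconnected_preimage).2 h.isPreconnected, ?_, h.pos, h.lt_one,
    ?_, ?_⟩
  · rw [hcl]
    exact (Complex.conjLIE.toHomeomorph.isPreconnected_preimage).2 h.isPreconnected_clearance
  · rw [hcl, mem_preimage, Complex.conj_ofReal]
    exact h.left_mem
  · rw [hcl, mem_preimage, Complex.conj_ofReal]
    exact h.right_mem

end IsCorridor

/-- The height of the highest point on or below the axis, in the vertical line at abscissa `t`,
where a unit disc touches no point of `U` above the axis. -/
def profile (U : Set ℂ) (t : ℝ) : ℝ :=
  sInf (insert 0 ((fun p : ℂ => p.im - √(1 - (p.re - t) ^ 2)) '' {p | p ∈ U ∧ 0 < p.im}))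

section profile

variable {U : Set ℂ} {a t : ℝ}

lemma bddBelow_profile (U : Set ℂ) (t : ℝ) : BddBelow
    (insert 0 ((fun p : ℂ => p.im - √(1 - (p.re - t) ^ 2)) '' {p | p ∈ U ∧ 0 < p.im})) := by
  refine ⟨-1, ?_⟩
  rintro _ (rfl | ⟨p, ⟨-, hp⟩, rfl⟩)
  · norm_num
  · have : √(1 - (p.re - t) ^ 2) ≤ 1 := Real.sqrt_le_one.2 (by nlinarith [sq_nonneg (p.re - t)])
    simp only
    linarith

lemma profile_nonpos (U : Set ℂ) (t : ℝ) : profile U t ≤ 0 :=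
  csInf_le (bddBelow_profile U t) (mem_insert _ _)

lemma profile_le {p : ℂ} (hp : p ∈ U) (him : 0 < p.im) (t : ℝ) :
    profile U t ≤ p.im - √(1 - (p.re - t) ^ 2) :=
  csInf_le (bddBelow_profile U t) (mem_insert_of_mem _ ⟨p, ⟨hp, him⟩, rfl⟩)

lemma exists_of_profile_lt {c : ℝ} (hc : c ≤ 0) (h : profile U t < c) :
    ∃ p ∈ U, 0 < p.im ∧ (t - p.re) ^ 2 + (c - p.im) ^ 2 < 1 := by
  obtain ⟨_, rfl | ⟨p, ⟨hp, him⟩, rfl⟩, hlt⟩ := exists_lt_of_csInf_lt (insert_nonempty _ _) h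
  · exact absurd hlt hc.not_gt
  · refine ⟨p, hp, him, ?_⟩
    have h1 : p.im - c < √(1 - (p.re - t) ^ 2) := by linarith
    rw [Real.lt_sqrt (by linarith)] at h1
    linarith

lemma one_le_of_le_profile {c : ℝ} (hc : c ≤ profile U t) {p : ℂ} (hp : p ∈ U) (him : 0 < p.im) :
    1 ≤ (t - p.re) ^ 2 + (c - p.im) ^ 2 := by
  have h1 : √(1 - (p.re - t) ^ 2) ≤ p.im - c := by linarith [profile_le hp him t]
  rw [Real.sqrt_le_left (by linarith [Real.sqrt_nonneg (1 - (p.re - t) ^ 2)])] at h1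
  linarith

lemma uniformContinuous_sqrt_one_sub_sq : UniformContinuous fun u : ℝ => √(1 - u ^ 2) := by
  refine HasCompactSupport.uniformContinuous_of_continuous ?_ (by fun_prop)
  refine HasCompactSupport.intro (isCompact_Icc (a := (-1 : ℝ)) (b := 1)) fun u hu => ?_
  refine Real.sqrt_eq_zero_of_nonpos ?_
  by_contra hcon
  exact hu (abs_le.1 (abs_le_one_iff_mul_self_le_one.2 (by nlinarith)))

lemma continuous_profile (U : Set ℂ) : Continuous (profile U) := by
  refine UniformContinuous.continuous (Metric.uniformContinuous_iff.2 fun ε hε => ?_)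
  obtain ⟨δ, hδ, hδε⟩ := Metric.uniformContinuous_iff.1 uniformContinuous_sqrt_one_sub_sq (ε / 2)
    (half_pos hε)
  have key : ∀ s t : ℝ, dist s t < δ → profile U s - ε / 2 ≤ profile U t := by
    intro s t hst
    refine le_csInf (insert_nonempty _ _) ?_
    rintro _ (rfl | ⟨p, ⟨hp, him⟩, rfl⟩)
    · linarith [profile_nonpos U s]
    · have h1 := profile_le hp him s
      have h2 := hδε (a := p.re - s) (b := p.re - t) (by rwa [dist_sub_left])
      rw [Real.dist_eq] at h2
      simp only
      linarith [abs_lt.1 h2]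
  refine ⟨δ, hδ, fun {s t} hst => ?_⟩
  rw [Real.dist_eq, abs_lt]
  constructor <;> linarith [key s t hst, key t s (by rwa [dist_comm])]

namespace IsCorridor

lemma mem_clearance_of_profile_neg (h : IsCorridor U a) (ht : t ∈ Icc (-a) a)
    (hneg : profile U t < 0) : (⟨t, profile U t⟩ : ℂ) ∈ clearance U := by
  intro q hq
  rw [one_le_dist_iff]
  rcases lt_or_ge 0 q.im with him | him
  · exact one_le_of_le_profile le_rfl hq him
  by_contra! hcon
  have hev : ∀ᶠ c in nhds (profile U t), (t - q.re) ^ 2 + (c - q.im) ^ 2 < 1 :=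
    ContinuousAt.eventually_lt (by fun_prop) continuousAt_const hcon
  obtain ⟨c, hc, hc1, hc2⟩ := ((hev.filter_mono nhdsWithin_le_nhds).and
    (Ioo_mem_nhdsGT hneg)).exists
  obtain ⟨p, hp, hpim, hpd⟩ := exists_of_profile_lt hc2.le hc1
  exact h.not_lt_and_lt hp hq hpim him ht hc2.le hpd hc

lemma sq_add_profile_sq_le (h : IsCorridor U a) (ht : t ∈ Icc (-a) a) :
    t ^ 2 + profile U t ^ 2 ≤ a ^ 2 := by
  by_contra! hcon
  have hk : 0 ≤ a ^ 2 - t ^ 2 := by nlinarith [ht.1, ht.2]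
  have hs := Real.sq_sqrt hk
  have hs0 := Real.sqrt_nonneg (a ^ 2 - t ^ 2)
  have hlt : profile U t < -√(a ^ 2 - t ^ 2) := by nlinarith [profile_nonpos U t]
  obtain ⟨p, hp, him, hd⟩ := exists_of_profile_lt (by linarith) hlt
  have hl := h.left_le hp
  have hr := h.right_le hp
  obtain ⟨ht1, ht2⟩ := ht
  have hpos := h.pos
  have hl' : 0 ≤ (a - t) * ((p.re + a) ^ 2 + p.im ^ 2 - 1) :=
    mul_nonneg (by linarith) (by linarith)
  have hr' : 0 ≤ (a + t) * ((p.re - a) ^ 2 + p.im ^ 2 - 1) :=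
    mul_nonneg (by linarith) (by linarith)
  have hsum : 0 ≤ 2 * a * (p.re ^ 2 + a ^ 2 + p.im ^ 2 - 1 - 2 * p.re * t) := by linarith
  have hsum' := nonneg_of_mul_nonneg_right hsum (by linarith)
  nlinarith [mul_nonneg hs0 him.le]

lemma profile_left (h : IsCorridor U a) : profile U (-a) = 0 := by
  have := h.sq_add_profile_sq_le (t := -a) (left_mem_Icc.2 (by linarith [h.pos]))
  exact pow_eq_zero_iff two_ne_zero |>.1 (by nlinarith [sq_nonneg (profile U (-a))])

lemma profile_right (h : IsCorridor U a) : profile U a = 0 := by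
  have := h.sq_add_profile_sq_le (t := a) (right_mem_Icc.2 (by linarith [h.pos]))
  exact pow_eq_zero_iff two_ne_zero |>.1 (by nlinarith [sq_nonneg (profile U a)])

/-- The profiles of the two sides of the corridor combine to the graph of a function that joins
`-a` to `a` inside the clearance and inside the disc with diameter `[-a, a]`. -/
lemma exists_graph (h : IsCorridor U a) : ∃ y : ℝ → ℝ, Continuous y ∧ y (-a) = 0 ∧ y a = 0 ∧
    ∀ t ∈ Icc (-a) a, (⟨t, y t⟩ : ℂ) ∈ clearance U ∧ t ^ 2 + y t ^ 2 ≤ a ^ 2 := by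
  set V : Set ℂ := starRingEnd ℂ ⁻¹' U with hV
  have hconj : IsCorridor V a := h.conj
  refine ⟨fun t => profile U t - profile V t, (continuous_profile U).sub (continuous_profile V),
    by simp [h.profile_left, hconj.profile_left],
    by simp [h.profile_right, hconj.profile_right], fun t ht => ?_⟩
  simp only
  rcases (profile_nonpos U t).lt_or_eq with hf | hf <;>
    rcases (profile_nonpos V t).lt_or_eq with hg | hg
  · exfalso
    obtain ⟨p, hp, hpim, hpd⟩ := exists_of_profile_lt le_rfl hf
    obtain ⟨q, hq, hqim, hqd⟩ := exists_of_profile_lt le_rfl hg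
    refine h.not_lt_and_lt hp (mem_preimage.1 hq) hpim (by simpa using hqim.le) ht le_rfl hpd ?_
    simpa using hqd
  · rw [hg, sub_zero]
    exact ⟨h.mem_clearance_of_profile_neg ht hf, h.sq_add_profile_sq_le ht⟩
  · rw [hf, zero_sub, neg_sq]
    refine ⟨fun u hu => ?_, hconj.sq_add_profile_sq_le ht⟩
    have := hconj.mem_clearance_of_profile_neg ht hg (starRingEnd ℂ u) (by simpa [hV] using hu)
    rw [one_le_dist_iff] at this ⊢
    simp only [Complex.conj_re, Complex.conj_im] at this ⊢
    linarith
  · rw [hf, hg, sub_zero]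
    refine ⟨fun u hu => ?_, by nlinarith [ht.1, ht.2]⟩
    rw [one_le_dist_iff]
    simp only
    rcases lt_trichotomy u.im 0 with him | him | him
    · have := one_le_of_le_profile (U := V) (t := t) (p := starRingEnd ℂ u) hg.ge
        (by simpa [hV] using hu) (by simpa using him)
      simp only [Complex.conj_re, Complex.conj_im] at this
      linarith
    · rw [him]
      linarith [h.one_le_sub_sq_of_im_eq_zero hu him ht]
    · exact one_le_of_le_profile hf.ge hu him

end IsCorridor

end profile

/-- Any two points of a connected clearance at distance less than two are joined by a path in the
clearance that stays within distance two of the first point. -/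
lemma joinedIn_clearance_inter_ball {U : Set Plane} (hU : IsOpen U) (hUc : IsPreconnected U)
    (hF : IsPreconnected (clearance U)) {x v : Plane} (hx : x ∈ clearance U)
    (hv : v ∈ clearance U) (hxv : dist x v < 2) : JoinedIn (clearance U ∩ ball x 2) x v := by
  rcases eq_or_ne x v with rfl | hne
  · exact JoinedIn.refl ⟨hx, mem_ball_self two_pos⟩
  set a : ℝ := dist x v / 2 with ha
  have ha0 : 0 < a := half_pos (dist_pos.2 hne)
  have ha1 : a < 1 := by linarith
  let φ : ℂ ≃ₗᵢ[ℝ] Plane := Complex.orthonormalBasisOneI.repr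
  set X := φ.symm x with hX
  set V := φ.symm v with hV
  have hn : ‖V - X‖ = 2 * a := by
    rw [hX, hV, ← dist_eq_norm, φ.symm.isometry.dist_eq, dist_comm, ha]
    ring
  have hn0 : ((‖V - X‖ : ℝ) : ℂ) ≠ 0 := by
    rw [hn]
    exact_mod_cast (by linarith : 2 * a ≠ 0)
  let c : Circle := ⟨(V - X) / ‖V - X‖, by
    rw [Submonoid.unitSphere, Submonoid.mem_mk, Subsemigroup.mem_mk, mem_sphere_zero_iff_norm,
      norm_div, Complex.norm_real, norm_norm, div_self (by exact_mod_cast hn0)]⟩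
  let e : ℂ ≃ᵢ Plane := ((rotation c).toIsometryEquiv.trans
    (IsometryEquiv.addLeft ((X + V) / 2))).trans φ.toIsometryEquiv
  have he : ∀ z : ℂ, e z = φ ((X + V) / 2 + (V - X) / ‖V - X‖ * z) := fun z => rfl
  have hel : e ((-a : ℝ) : ℂ) = x := by
    rw [he, ← φ.apply_symm_apply x, ← hX]
    congr 1
    rw [show a = ‖V - X‖ / 2 by linarith]
    push_cast
    field_simp
    ring
  have her : e ((a : ℝ) : ℂ) = v := by
    rw [he, ← φ.apply_symm_apply v, ← hV]
    congr 1
    rw [show a = ‖V - X‖ / 2 by linarith]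
    push_cast
    field_simp
    ring
  have hcl : clearance (e ⁻¹' U) = e ⁻¹' clearance U := by
    ext z
    refine ⟨fun hz u hu => ?_, fun hz u hu => ?_⟩
    · rw [← e.apply_symm_apply u, e.dist_eq]
      exact hz _ (by simpa using hu)
    · rw [← e.dist_eq]
      exact hz _ hu
  have hcor : IsCorridor (e ⁻¹' U) a := by
    refine ⟨hU.preimage e.continuous, e.toHomeomorph.isPreconnected_preimage.2 hUc, ?_, ha0, ha1,
      ?_, ?_⟩
    · rw [hcl]
      exact e.toHomeomorph.isPreconnected_preimage.2 hF
    · rwa [hcl, mem_preimage, hel]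
    · rwa [hcl, mem_preimage, her]
  obtain ⟨y, hy, hyl, hyr, hgraph⟩ := hcor.exists_graph
  have hcurve : Continuous fun t : ℝ => (⟨t, y t⟩ : ℂ) :=
    Complex.equivRealProdCLM.symm.continuous.comp (continuous_id.prodMk hy)
  have hpc : IsPathConnected ((fun t : ℝ => e ⟨t, y t⟩) '' Icc (-a) a) :=
    ((convex_Icc (-a) a).isPathConnected (nonempty_Icc.2 (by linarith))).image
      (e.continuous.comp hcurve)
  have hjoin := hpc.joinedIn x ⟨-a, left_mem_Icc.2 (by linarith), by
    rw [← hel]; exact congrArg e (by rw [hyl]; rfl)⟩ v ⟨a, right_mem_Icc.2 (by linarith), by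
    rw [← her]; exact congrArg e (by rw [hyr]; rfl)⟩
  refine hjoin.mono ?_
  rintro _ ⟨t, ht, rfl⟩
  obtain ⟨hmem, hdisc⟩ := hgraph t ht
  rw [hcl] at hmem
  refine ⟨hmem, ?_⟩
  rw [mem_ball, ← hel, e.dist_eq, Complex.dist_eq_re_im, Real.sqrt_lt' two_pos]
  simp only [Complex.ofReal_re, Complex.ofReal_im]
  nlinarith [ht.1, ht.2]

/-! ### The exterior of a simple polygon -/

lemma isPreconnected_compl_closedBall_zero {E : Type*} [NormedAddCommGroup E] [NormedSpace ℝ E]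
    (h : 1 < Module.rank ℝ E) {R : ℝ} (hR : 0 ≤ R) : IsPreconnected (closedBall (0 : E) R)ᶜ := by
  have himage : (closedBall (0 : E) R)ᶜ =
      (fun z : ℝ × E => z.1 • z.2) '' (Ioi R ×ˢ sphere (0 : E) 1) := by
    ext v
    constructor
    · intro hv
      have hv' : R < ‖v‖ := by simpa using hv
      have h0 : ‖v‖ ≠ 0 := by linarith
      refine ⟨(‖v‖, ‖v‖⁻¹ • v), ⟨hv', ?_⟩, ?_⟩
      · simp [norm_smul, h0]
      · simp [smul_smul, h0]
    · rintro ⟨⟨r, u⟩, ⟨hr, hu⟩, rfl⟩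
      have hr' : R < r := hr
      have hu' : ‖u‖ = 1 := by simpa using hu
      simp only [mem_compl_iff, mem_closedBall, dist_zero_right, not_le, norm_smul, hu', mul_one]
      exact hr'.trans_le (le_abs_self r)
  rw [himage]
  exact (isPreconnected_Ioi.prod (isPreconnected_sphere h 0 1)).image _ (by fun_prop)

namespace SimplePolygon

lemma isCompact_bdryCurve (P : SimplePolygon) : IsCompact P.bdryCurve :=
  isCompact_Icc.image P.continuous

lemma mem_compl_region {P : SimplePolygon} {x : Plane} : x ∈ P.regionᶜ ↔
    x ∈ P.bdryCurveᶜ ∧ ¬ Bornology.IsBounded (connectedComponentIn P.bdryCurveᶜ x) := by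
  simp only [region, mem_compl_iff, mem_union, mem_ofPred_eq]
  tauto

lemma connectedComponentIn_subset_compl_region {P : SimplePolygon} {x : Plane}
    (hx : x ∈ P.regionᶜ) : connectedComponentIn P.bdryCurveᶜ x ⊆ P.regionᶜ := by
  intro y hy
  refine mem_compl_region.2 ⟨connectedComponentIn_subset _ _ hy, ?_⟩
  rw [← connectedComponentIn_eq hy]
  exact (mem_compl_region.1 hx).2

lemma isOpen_compl_region (P : SimplePolygon) : IsOpen P.regionᶜ := by
  refine isOpen_iff_mem_nhds.2 fun x hx => ?_
  exact Filter.mem_of_superset (P.isCompact_bdryCurve.isClosed.isOpen_compl.connectedComponentIn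
    |>.mem_nhds (mem_connectedComponentIn (mem_compl_region.1 hx).1))
    (connectedComponentIn_subset_compl_region hx)

lemma isPreconnected_compl_region (P : SimplePolygon) : IsPreconnected P.regionᶜ := by
  obtain ⟨R, hR, hsub⟩ := P.isCompact_bdryCurve.isBounded.subset_closedBall_lt 0 0
  have hfar : IsPreconnected (closedBall (0 : Plane) R)ᶜ :=
    isPreconnected_compl_closedBall_zero (by simp [← Module.finrank_eq_rank]) hR.le
  have hfarpt : ∀ x ∈ P.regionᶜ, ∃ z ∈ connectedComponentIn P.bdryCurveᶜ x,
      z ∈ (closedBall (0 : Plane) R)ᶜ := fun x hx => not_subset.1 fun h =>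
    (mem_compl_region.1 hx).2 (isBounded_closedBall.subset h)
  refine isPreconnected_of_forall_pair fun x hx y hy => ?_
  obtain ⟨z, hz, hzR⟩ := hfarpt x hx
  obtain ⟨w, hw, hwR⟩ := hfarpt y hy
  have hzw := hfar.subset_connectedComponentIn hzR (compl_subset_compl.2 hsub) hwR
  have hxy : connectedComponentIn P.bdryCurveᶜ x = connectedComponentIn P.bdryCurveᶜ y :=
    ((connectedComponentIn_eq hz).trans (connectedComponentIn_eq hzw)).trans
      (connectedComponentIn_eq hw).symm
  exact ⟨_, connectedComponentIn_subset_compl_region hx,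
    mem_connectedComponentIn (mem_compl_region.1 hx).1,
    hxy ▸ mem_connectedComponentIn (mem_compl_region.1 hy).1, isPreconnected_connectedComponentIn⟩

lemma freeSpace_eq_clearance (P : SimplePolygon) : P.freeSpace = clearance P.regionᶜ := by
  ext x
  refine ⟨fun hx u hu => ?_, fun hx u hu => ?_⟩
  · by_contra! hcon
    exact hu (hx (by rwa [mem_ball, dist_comm]))
  · by_contra hcon
    rw [mem_ball, dist_comm] at hu
    exact (hx u hcon).not_gt hu

end SimplePolygon

/-- For every blocker `x ∈ T` and every blocking area `b` of `x`, there is a path in the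
free space from `x` to `b` staying inside `D₂(x)` and avoiding every blocking area of
every other blocker. -/
theorem blocking_path_exists (P : SimplePolygon) (S T : Set Plane)
    (hconn : IsConnected P.freeSpace)
    (hS : S ⊆ P.freeSpace) (hT : T ⊆ P.freeSpace)
    (hSfin : S.Finite) (hTfin : T.Finite)
    (hmonoS : ∀ s₁ ∈ S, ∀ s₂ ∈ S, s₁ ≠ s₂ → 4 ≤ dist s₁ s₂)
    (hmonoT : ∀ t₁ ∈ T, ∀ t₂ ∈ T, t₁ ≠ t₂ → 4 ≤ dist t₁ t₂)
    (hbi : ∀ s ∈ S, ∀ t ∈ T, 2 ≤ dist s t)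
    (x : Plane) (hx : x ∈ T) (b : Set Plane)
    (hb : BlockingArea P.freeSpace S x b) :
    ∃ π : unitInterval → Plane, Continuous π ∧
      π 0 = x ∧ π 1 ∈ b ∧
      (∀ τ, π τ ∈ P.freeSpace) ∧
      (∀ τ, π τ ∈ Metric.ball x 2) ∧
      ∀ y ∈ T, y ≠ x → ∀ b' : Set Plane, BlockingArea P.freeSpace S y b' →
        ∀ τ, π τ ∉ b' := by
  obtain ⟨⟨⟨v, hv, rfl⟩, -⟩, -⟩ := hb
  have hxF := hT hx
  have hvF := hv.1.2
  rw [P.freeSpace_eq_clearance] at hconn hxF hvF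
  have hdist : dist x v < 2 := by
    rw [dist_comm]
    exact hv.1.1
  obtain ⟨γ, hγ⟩ := joinedIn_clearance_inter_ball P.isOpen_compl_region
    P.isPreconnected_compl_region hconn.isPreconnected hxF hvF hdist
  refine ⟨γ, γ.continuous, γ.source, ?_, fun τ => ?_, fun τ => (hγ τ).2, ?_⟩
  · rw [γ.target]
    exact mem_connectedComponentIn hv
  · rw [P.freeSpace_eq_clearance]
    exact (hγ τ).1
  · rintro y hy hyx b' ⟨⟨⟨p, -, rfl⟩, -⟩, -⟩ τ hτ
    have hτy : γ τ ∈ ball y 2 := (connectedComponentIn_subset _ _ hτ).1.1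
    have hdisj : Disjoint (ball x 2) (ball y 2) :=
      ball_disjoint_ball (by linarith [hmonoT x hx y hy hyx.symm])
    exact hdisj.notMem_of_mem_left (hγ τ).2 hτy
end
end

section
/- Let W ⊆ ℝ² be a simple polygon with free space F, and let x and y be distinct points lying in the same connected component of F with dist(x, y) < 2. Then there exists a continuous path π : [0,1] → ℝ² with π(0) = x and π(1) = y whose image is contained in F ∩ D₂(x) ∩ D₂(y). -/
open Metric Set

noncomputable section

/-- The complement of a closed ball centred at the origin of the plane is preconnected. -/
theorem isPreconnected_norm_gt (R : ℝ) (hR : 0 ≤ R) : IsPreconnected {z : Plane | R < ‖z‖} := by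
  have hrank : 1 < Module.rank ℝ Plane := by
    rw [← Module.finrank_eq_rank, finrank_euclideanSpace_fin]; norm_num
  have himage : (fun p : ℝ × Plane => p.1 • p.2) '' (Ioi R ×ˢ sphere (0 : Plane) 1)
      = {z : Plane | R < ‖z‖} := by
    ext z
    constructor
    · rintro ⟨⟨r, u⟩, ⟨hr, hu⟩, rfl⟩
      have hr' : R < r := hr
      have hu' : ‖u‖ = 1 := by simpa using hu
      change R < ‖r • u‖
      rw [norm_smul, hu', mul_one, Real.norm_of_nonneg (hR.trans hr'.le)]
      exact hr'
    · intro hz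
      have hz' : R < ‖z‖ := hz
      have hne : ‖z‖ ≠ 0 := (hR.trans_lt hz').ne'
      refine ⟨(‖z‖, ‖z‖⁻¹ • z), ⟨hz', ?_⟩, ?_⟩
      · simp [norm_smul, hne]
      · simp [smul_smul, hne]
  rw [← himage]
  exact (isPreconnected_Ioi.prod (isPreconnected_sphere hrank 0 1)).image _
    (by fun_prop)

/-- The exterior of a simple polygon is preconnected. -/
theorem SimplePolygon.isPreconnected_compl_region_s8 (P : SimplePolygon) :
    IsPreconnected P.regionᶜ := by
  have hcompact : IsCompact P.bdryCurve := isCompact_Icc.image P.continuous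
  obtain ⟨R, hR0, hR⟩ : ∃ R : ℝ, 0 ≤ R ∧ ∀ z ∈ P.bdryCurve, ‖z‖ ≤ R := by
    obtain ⟨R, hR⟩ := hcompact.isBounded.exists_norm_le
    exact ⟨max R 0, le_max_right _ _, fun z hz => (hR z hz).trans (le_max_left _ _)⟩
  have hext : {z : Plane | R < ‖z‖} ⊆ P.bdryCurveᶜ := fun z hz hzc =>
    (not_lt.2 (hR z hzc)) hz
  have hmem : ∀ z ∈ P.regionᶜ,
      z ∉ P.bdryCurve ∧ ¬ Bornology.IsBounded (connectedComponentIn P.bdryCurveᶜ z) := by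
    intro z hz
    simp only [SimplePolygon.region, mem_compl_iff, mem_union, mem_ofPred_eq, not_or, not_and] at hz
    exact ⟨hz.1, hz.2 hz.1⟩
  have hfar : ∀ z ∈ P.regionᶜ, ∃ w ∈ connectedComponentIn P.bdryCurveᶜ z, R < ‖w‖ := by
    intro z hz
    by_contra! h
    exact (hmem z hz).2 ((isBounded_iff_forall_norm_le).2 ⟨R, h⟩)
  refine isPreconnected_of_forall_pair fun a ha b hb => ?_
  obtain ⟨w, hw, hwR⟩ := hfar a ha
  obtain ⟨v, hv, hvR⟩ := hfar b hb
  have hvw : v ∈ connectedComponentIn P.bdryCurveᶜ w :=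
    (isPreconnected_norm_gt R hR0).subset_connectedComponentIn hwR hext hvR
  have hab : connectedComponentIn P.bdryCurveᶜ a = connectedComponentIn P.bdryCurveᶜ b := by
    rw [connectedComponentIn_eq hw, connectedComponentIn_eq hvw, connectedComponentIn_eq hv]
  refine ⟨connectedComponentIn P.bdryCurveᶜ a, ?_, mem_connectedComponentIn (hmem a ha).1,
    hab ▸ mem_connectedComponentIn (hmem b hb).1, isPreconnected_connectedComponentIn⟩
  intro z hz
  have hzc : z ∉ P.bdryCurve := connectedComponentIn_subset _ _ hz
  simp only [SimplePolygon.region, mem_compl_iff, mem_union, mem_ofPred_eq, not_or, not_and]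
  refine ⟨hzc, fun _ => ?_⟩
  rw [← connectedComponentIn_eq hz]
  exact (hmem a ha).2

/-- A position is free iff it has distance at least one from the exterior. -/
theorem SimplePolygon.mem_freeSpace_iff (P : SimplePolygon) (z : Plane) :
    z ∈ P.freeSpace ↔ ∀ u ∈ P.regionᶜ, 1 ≤ dist z u := by
  constructor
  · intro hz u hu
    by_contra! h
    exact hu (hz (by rwa [mem_ball, dist_comm]))
  · intro h u hu
    by_contra hn
    have := h u hn
    rw [mem_ball, dist_comm] at hu
    linarith

/-- Two continuous logarithms of the same function on a preconnected set differ by a constant. -/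
theorem sub_eq_sub_of_exp_eq_s8 {S : Set ℂ} (hS : IsPreconnected S) {g G : ℂ → ℂ}
    (hg : ContinuousOn g S) (hG : ContinuousOn G S)
    (h : ∀ w ∈ S, Complex.exp (g w) = Complex.exp (G w)) {b c : ℂ} (hb : b ∈ S) (hc : c ∈ S) :
    g b - G b = g c - G c := by
  have hdisc : IsDiscrete (range ((↑) : ℤ → ℝ)) := by
    rw [isDiscrete_iff_discreteTopology]
    exact (Int.isClosedEmbedding_coe_real.toHomeomorph).symm.isEmbedding.discreteTopology
  have hpi : (Real.pi : ℂ) ≠ 0 := by exact_mod_cast Real.pi_ne_zero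
  have hval : ∀ w ∈ S, ∃ n : ℤ, g w - G w = n * (2 * Real.pi * Complex.I) := by
    intro w hw
    obtain ⟨n, hn⟩ := Complex.exp_eq_exp_iff_exists_int.1 (h w hw)
    exact ⟨n, by rw [hn]; ring⟩
  have hquot : ∀ w (n : ℤ), g w - G w = n * (2 * Real.pi * Complex.I) →
      ((g w - G w) / (2 * Real.pi * Complex.I)).re = n := by
    intro w n hn
    rw [hn, mul_div_assoc, div_self (by simp [hpi])]
    simp
  have hconst := hS.constant_of_mapsTo hdisc
    (f := fun w => ((g w - G w) / (2 * Real.pi * Complex.I)).re)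
    (Complex.continuous_re.comp_continuousOn ((hg.sub hG).div_const _))
    (fun w hw => by
      obtain ⟨n, hn⟩ := hval w hw
      exact ⟨n, (hquot w n hn).symm⟩) hb hc
  obtain ⟨n, hn⟩ := hval b hb
  obtain ⟨m, hm⟩ := hval c hc
  have hnm : (n : ℝ) = m := by rw [← hquot b n hn, ← hquot c m hm]; exact hconst
  have : n = m := by exact_mod_cast hnm
  rw [hn, hm, this]

/-- If `x` and `y` lie in a preconnected set each of whose points keeps a positive distance
from `K`, then `w ↦ (w - x) / (w - y)` has a continuous logarithm on `K`. -/
theorem exists_continuousOn_log_div_s8 {K C : Set ℂ} (hC : IsPreconnected C)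
    (hsep : ∀ z ∈ C, ∃ ε > 0, ∀ w ∈ K, ε ≤ ‖w - z‖) {x y : ℂ} (hx : x ∈ C) (hy : y ∈ C) :
    ∃ g : ℂ → ℂ, ContinuousOn g K ∧ ∀ w ∈ K, Complex.exp (g w) = (w - x) / (w - y) := by
  have hne : ∀ z ∈ C, ∀ w ∈ K, w - z ≠ 0 := by
    intro z hz w hw h0
    obtain ⟨ε, hε, h⟩ := hsep z hz
    have := h w hw
    rw [h0, norm_zero] at this
    linarith
  refine hC.induction₂ (fun x y => ∃ g : ℂ → ℂ, ContinuousOn g K ∧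
    ∀ w ∈ K, Complex.exp (g w) = (w - x) / (w - y)) ?_ ?_ ?_ hx hy
  · intro z hz
    obtain ⟨ε, hε, h⟩ := hsep z hz
    filter_upwards [self_mem_nhdsWithin,
      mem_nhdsWithin_of_mem_nhds (Metric.ball_mem_nhds z hε)] with z' hz' hdist
    have hslit : ∀ w ∈ K, (w - z') / (w - z) ∈ Complex.slitPlane := by
      intro w hw
      have heq : (w - z') / (w - z) = 1 + (z - z') / (w - z) := by
        have := hne z hz w hw
        field_simp
        ring
      rw [heq]
      apply Complex.mem_slitPlane_of_norm_lt_one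
      rw [norm_div, div_lt_one (norm_pos_iff.2 (hne z hz w hw)), ← dist_eq_norm, dist_comm]
      exact (mem_ball.1 hdist).trans_le (h w hw)
    refine ⟨fun w => -Complex.log ((w - z') / (w - z)), ?_, ?_⟩
    · refine (ContinuousOn.clog ?_ hslit).neg
      exact (by fun_prop : ContinuousOn (fun w : ℂ => w - z') K).div (by fun_prop)
        (hne z hz)
    · intro w hw
      rw [Complex.exp_neg, Complex.exp_log (Complex.slitPlane_ne_zero (hslit w hw)), inv_div]
  · rintro a b c ha hb hc ⟨g, hg, hg'⟩ ⟨k, hk, hk'⟩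
    refine ⟨fun w => g w + k w, hg.add hk, fun w hw => ?_⟩
    rw [Complex.exp_add, hg' w hw, hk' w hw]
    exact div_mul_div_cancel₀ (hne b hb w hw)
  · rintro a b ha hb ⟨g, hg, hg'⟩
    refine ⟨fun w => -g w, hg.neg, fun w hw => ?_⟩
    rw [Complex.exp_neg, hg' w hw, inv_div]

/-- Two points of a preconnected set `U` on either side of the segment from `0` to `d`, with
distance less than two, whose connecting segment crosses that segment, prevent `0` and `d` from
lying in a common preconnected set of distance at least one from `U`. -/
theorem not_crossing {U C : Set ℂ} (hU : IsPreconnected U) (hC : IsPreconnected C) {d : ℝ}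
    (hd0 : 0 < d) (hd2 : d < 2) (h0C : (0 : ℂ) ∈ C) (hdC : (d : ℂ) ∈ C)
    (hsep : ∀ z ∈ C, ∀ u ∈ U, 1 ≤ ‖u - z‖) {b c : ℂ} (hb : b ∈ U) (hc : c ∈ U)
    (hbim : b.im < 0) (hcim : 0 < c.im) (hbc : ‖b - c‖ < 2)
    (hcross : ∀ m : ℝ, (m : ℂ) ∈ segment ℝ b c → 0 < m ∧ m < d) : False := by
  have hsegsep : ∀ z ∈ C, ∀ w ∈ segment ℝ b c, w ≠ z := by
    rintro z hz w hw rfl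
    have h1 := hsep w hz b hb
    have h2 := hsep w hz c hc
    have h3 := dist_add_dist_of_mem_segment hw
    simp only [dist_eq_norm] at h3
    rw [norm_sub_rev w c] at h3
    linarith
  have hsep' : ∀ z ∈ C, ∃ ε > 0, ∀ w ∈ U ∪ segment ℝ b c, ε ≤ ‖w - z‖ := by
    intro z hz
    have hcpt : IsCompact (segment ℝ b c) := by
      rw [segment_eq_image_lineMap]
      exact isCompact_Icc.image AffineMap.lineMap_continuous
    obtain ⟨w₀, hw₀, hmin⟩ := hcpt.exists_isMinOn ⟨b, left_mem_segment ℝ b c⟩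
      (f := fun w => ‖w - z‖) (by fun_prop)
    refine ⟨min 1 ‖w₀ - z‖, lt_min one_pos (norm_pos_iff.2 (sub_ne_zero.2 (hsegsep z hz _ hw₀))), ?_⟩
    rintro w (hw | hw)
    · exact (min_le_left _ _).trans (hsep z hz w hw)
    · exact (min_le_right _ _).trans (hmin hw)
  obtain ⟨g, hg, hg'⟩ := exists_continuousOn_log_div_s8 hC hsep' h0C hdC
  have him : ∀ w : ℂ, ((w - 0) / (w - d)).im = -(d * w.im) / Complex.normSq (w - d) := by
    intro w
    rw [Complex.div_im]
    simp
    ring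
  have hre : ∀ w : ℂ, w.im = 0 →
      ((w - 0) / (w - d)).re = w.re * (w.re - d) / Complex.normSq (w - d) := by
    intro w hw
    rw [Complex.div_re]
    simp [hw]
  have hnsq : ∀ w ∈ U ∪ segment ℝ b c, 0 < Complex.normSq (w - d) := by
    intro w hw
    obtain ⟨ε, hε, h⟩ := hsep' d hdC
    exact Complex.normSq_pos.2 (norm_pos_iff.1 (hε.trans_le (h w hw)))
  have hslitU : ∀ w ∈ U, (w - 0) / (w - d) ∈ Complex.slitPlane := by
    intro w hw
    have hn := hnsq w (Or.inl hw)
    rw [Complex.mem_slitPlane_iff]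
    by_cases hw0 : w.im = 0
    · left
      rw [hre w hw0]
      apply div_pos _ hn
      have hwre : w = (w.re : ℂ) := Complex.ext rfl (by simpa using hw0)
      have h1 := hsep 0 h0C w hw
      have h2 := hsep d hdC w hw
      rw [hwre, sub_zero, Complex.norm_real, Real.norm_eq_abs, le_abs] at h1
      rw [hwre, ← Complex.ofReal_sub, Complex.norm_real, Real.norm_eq_abs, le_abs] at h2
      rcases h1 with h1 | h1 <;> rcases h2 with h2 | h2 <;> nlinarith
    · right
      rw [him]
      exact div_ne_zero (neg_ne_zero.2 (mul_ne_zero hd0.ne' hw0)) hn.ne'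
  have hslitS : ∀ w ∈ segment ℝ b c, -((w - 0) / (w - d)) ∈ Complex.slitPlane := by
    intro w hw
    have hn := hnsq w (Or.inr hw)
    rw [Complex.mem_slitPlane_iff]
    by_cases hw0 : w.im = 0
    · left
      rw [Complex.neg_re, hre w hw0, ← neg_div]
      apply div_pos _ hn
      have hwre : w = (w.re : ℂ) := Complex.ext rfl (by simpa using hw0)
      have := hcross w.re (hwre ▸ hw)
      nlinarith
    · right
      rw [Complex.neg_im, him]
      exact neg_ne_zero.2 (div_ne_zero (neg_ne_zero.2 (mul_ne_zero hd0.ne' hw0)) hn.ne')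
  have hcont : ContinuousOn (fun w : ℂ => (w - 0) / (w - d)) (U ∪ segment ℝ b c) :=
    (by fun_prop : ContinuousOn (fun w : ℂ => w - 0) _).div (by fun_prop)
      (fun w hw => Complex.normSq_pos.1 (hnsq w hw))
  have e1 := sub_eq_sub_of_exp_eq_s8 hU (hg.mono subset_union_left)
    ((hcont.mono subset_union_left).clog hslitU)
    (fun w hw => by rw [hg' w (Or.inl hw), Complex.exp_log (Complex.slitPlane_ne_zero (hslitU w hw))])
    hb hc
  have e2 := sub_eq_sub_of_exp_eq_s8 (convex_segment b c).isPreconnected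
    ((hg.mono subset_union_right).add_const (Real.pi * Complex.I))
    ((hcont.mono subset_union_right).fun_neg.clog hslitS)
    (fun w hw => by
      rw [Complex.exp_add, Complex.exp_pi_mul_I, hg' w (Or.inr hw),
        Complex.exp_log (Complex.slitPlane_ne_zero (hslitS w hw))]
      ring)
    (left_mem_segment ℝ b c) (right_mem_segment ℝ b c)
  have hbpos : 0 < ((b - 0) / (b - d)).im := by
    rw [him]
    exact div_pos (by nlinarith) (hnsq b (Or.inl hb))
  have hcneg : ((c - 0) / (c - d)).im < 0 := by
    rw [him]
    exact div_neg_of_neg_of_pos (by nlinarith) (hnsq c (Or.inl hc))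
  have e1' := congrArg Complex.im e1
  have e2' := congrArg Complex.im e2
  simp only [Complex.sub_im, Complex.add_im, Complex.log_im] at e1' e2'
  rw [Complex.arg_neg_eq_arg_sub_pi_of_im_pos hbpos,
    Complex.arg_neg_eq_arg_add_pi_of_im_neg hcneg] at e2'
  linarith [Real.pi_pos]

theorem norm_sub_lt_one_iff (z w : ℂ) :
    ‖z - w‖ < 1 ↔ (z.re - w.re) ^ 2 + (z.im - w.im) ^ 2 < 1 := by
  rw [← sq_lt_one_iff₀ (norm_nonneg _), ← Complex.normSq_eq_norm_sq, Complex.normSq_apply]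
  simp only [Complex.sub_re, Complex.sub_im, ← sq]

theorem one_le_norm_sub_iff (z w : ℂ) :
    1 ≤ ‖z - w‖ ↔ 1 ≤ (z.re - w.re) ^ 2 + (z.im - w.im) ^ 2 := by
  rw [← not_lt, norm_sub_lt_one_iff, not_lt]

/-- If two points `b`, `c` on either side of the real line share an open unit disc centred above
`[0, d]` and both avoid the open unit discs around `0` and `d`, then the segment from `b` to `c`
crosses the real line strictly between `0` and `d`. -/
theorem crossing_between {d t s : ℝ} (ht : t ∈ Icc 0 d) (hs : 0 ≤ s) {b c : ℂ}
    (hb0 : 1 ≤ ‖b - 0‖) (hbd : 1 ≤ ‖b - d‖) (hc0 : 1 ≤ ‖c - 0‖) (hcd : 1 ≤ ‖c - d‖)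
    (hbim : b.im < 0) (hbre : b.re ∈ Icc 0 d)
    (hb : ‖(⟨t, s⟩ : ℂ) - b‖ < 1) (hc : ‖(⟨t, s⟩ : ℂ) - c‖ < 1)
    {m : ℝ} (hm : (m : ℂ) ∈ segment ℝ b c) : 0 < m ∧ m < d := by
  set q : ℂ := ⟨t, s⟩ with hq
  set E : Set ℝ := {r : ℝ | ‖(r : ℂ) - b‖ + ‖(r : ℂ) - c‖ < 2} with hE
  have hconv : Convex ℝ {p : ℂ | ‖p - b‖ + ‖p - c‖ < 2} := by
    have h : ConvexOn ℝ univ (fun p : ℂ => dist p b + dist p c) :=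
      (convexOn_univ_dist b).add (convexOn_univ_dist c)
    have := h.convex_lt 2
    simpa [dist_eq_norm] using this
  have hord : E.OrdConnected :=
    (hconv.linear_preimage Complex.ofRealCLM.toLinearMap).ordConnected
  have hmE : m ∈ E := by
    have h := dist_add_dist_of_mem_segment hm
    have h2 : ‖b - c‖ ≤ ‖q - b‖ + ‖q - c‖ := by
      rw [norm_sub_rev q b]
      exact norm_sub_le_norm_sub_add_norm_sub b q c
    simp only [dist_eq_norm] at h
    rw [norm_sub_rev b] at h
    change ‖(m : ℂ) - b‖ + ‖(m : ℂ) - c‖ < 2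
    linarith
  have hpos : 0 < s - b.im := by linarith
  obtain ⟨n, hn, hnb⟩ : ∃ n : ℝ, n ∈ Icc 0 d ∧ (n : ℂ) ∈ segment ℝ b q := by
    have ha : 0 ≤ s / (s - b.im) := by positivity
    have ha' : 0 ≤ -b.im / (s - b.im) := div_nonneg (by linarith) hpos.le
    have hsum : s / (s - b.im) + -b.im / (s - b.im) = 1 := by field_simp; ring
    refine ⟨s / (s - b.im) * b.re + -b.im / (s - b.im) * t, ?_, s / (s - b.im),
      -b.im / (s - b.im), ha, ha', hsum, ?_⟩
    · exact convex_Icc 0 d hbre ht ha ha' hsum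
    · apply Complex.ext
      · simp only [Complex.add_re, Complex.real_smul, Complex.re_ofReal_mul, Complex.ofReal_re, hq]
      · simp only [Complex.add_im, Complex.real_smul, Complex.im_ofReal_mul, Complex.ofReal_im, hq]
        field_simp
        ring
  have hnE : n ∈ E := by
    have h := dist_add_dist_of_mem_segment hnb
    simp only [dist_eq_norm] at h
    rw [norm_sub_rev b n, norm_sub_rev b q] at h
    have h2 := norm_sub_le_norm_sub_add_norm_sub (n : ℂ) q c
    change ‖(n : ℂ) - b‖ + ‖(n : ℂ) - c‖ < 2
    linarith
  have h0E : (0 : ℝ) ∉ E := by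
    intro h
    have h' : ‖((0 : ℝ) : ℂ) - b‖ + ‖((0 : ℝ) : ℂ) - c‖ < 2 := h
    rw [norm_sub_rev, norm_sub_rev _ c, Complex.ofReal_zero] at h'
    linarith
  have hdE : d ∉ E := by
    intro h
    have h' : ‖(d : ℂ) - b‖ + ‖(d : ℂ) - c‖ < 2 := h
    rw [norm_sub_rev, norm_sub_rev _ c] at h'
    linarith
  constructor
  · by_contra! h
    exact h0E (hord.out hmE hnE ⟨h, hn.1⟩)
  · by_contra! h
    exact hdE (hord.out hnE hmE ⟨hn.2, h⟩)

/-- The height above the real line, at abscissa `t`, of the closed unit disc around `b`, cut off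
below at zero (for `b` in the closed lower half-plane). -/
def discHeight (b : ℂ) (t : ℝ) : ℝ :=
  √(max (b.im ^ 2) (1 - (t - b.re) ^ 2)) + b.im

theorem discHeight_nonneg (b : ℂ) (t : ℝ) : 0 ≤ discHeight b t := by
  have h : |b.im| ≤ √(max (b.im ^ 2) (1 - (t - b.re) ^ 2)) :=
    Real.abs_le_sqrt (le_max_left _ _)
  have := neg_abs_le b.im
  unfold discHeight
  linarith

theorem discHeight_le_one {b : ℂ} (hb : b.im ≤ 0) (t : ℝ) : discHeight b t ≤ 1 := by
  have h : √(max (b.im ^ 2) (1 - (t - b.re) ^ 2)) ≤ 1 - b.im := by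
    rw [Real.sqrt_le_left (by linarith)]
    exact max_le (by nlinarith) (by nlinarith [sq_nonneg (t - b.re)])
  unfold discHeight
  linarith

theorem lt_discHeight_iff {b : ℂ} (hb : b.im ≤ 0) (t : ℝ) {s : ℝ} (hs : 0 ≤ s) :
    s < discHeight b t ↔ ‖(⟨t, s⟩ : ℂ) - b‖ < 1 := by
  rw [norm_sub_lt_one_iff, discHeight, ← sub_lt_iff_lt_add, Real.lt_sqrt (by linarith), lt_max_iff]
  constructor
  · rintro (h | h)
    · nlinarith
    · simp only
      linarith
  · intro h
    right
    simp only at h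
    linarith

/-- `discHeight` is Lipschitz in `t`, with a constant controlled by the depth of `b`. -/
theorem discHeight_le_add {b : ℂ} {d h t t' : ℝ} (hd2 : d < 2) (hh : 0 < h) (hb : b.im ≤ -h)
    (hbre : b.re ∈ Icc 0 d) (ht : t ∈ Icc 0 d) (ht' : t' ∈ Icc 0 d) :
    discHeight b t ≤ discHeight b t' + 2 / h * dist t t' := by
  set A := max (b.im ^ 2) (1 - (t - b.re) ^ 2) with hA
  set B := max (b.im ^ 2) (1 - (t' - b.re) ^ 2) with hB
  have hAB : A - B ≤ 4 * |t - t'| := by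
    have key : (1 - (t - b.re) ^ 2) - (1 - (t' - b.re) ^ 2) ≤ 4 * |t - t'| := by
      have e : (1 - (t - b.re) ^ 2) - (1 - (t' - b.re) ^ 2)
          = (t - t') * (2 * b.re - t - t') := by ring
      rw [e]
      refine (le_abs_self _).trans ?_
      rw [abs_mul, mul_comm]
      refine mul_le_mul_of_nonneg_right ?_ (abs_nonneg _)
      rw [abs_le]
      constructor <;> linarith [hbre.1, hbre.2, ht.1, ht.2, ht'.1, ht'.2]
    have hnn := abs_nonneg (t - t')
    have h1 : A ≤ B + 4 * |t - t'| :=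
      max_le (by linarith [le_max_left (b.im ^ 2) (1 - (t' - b.re) ^ 2)])
        (by linarith [le_max_right (b.im ^ 2) (1 - (t' - b.re) ^ 2)])
    linarith
  have hhA : h ≤ √A := Real.le_sqrt_of_sq_le ((by nlinarith : h ^ 2 ≤ b.im ^ 2).trans (le_max_left _ _))
  have hhB : h ≤ √B := Real.le_sqrt_of_sq_le ((by nlinarith : h ^ 2 ≤ b.im ^ 2).trans (le_max_left _ _))
  have hA2 : √A ^ 2 = A := Real.sq_sqrt ((sq_nonneg _).trans (le_max_left _ _))
  have hB2 : √B ^ 2 = B := Real.sq_sqrt ((sq_nonneg _).trans (le_max_left _ _))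
  have hfin : √A - √B ≤ 2 / h * |t - t'| := by
    rw [div_mul_eq_mul_div, le_div_iff₀ hh]
    by_cases hle : √A ≤ √B
    · nlinarith [abs_nonneg (t - t')]
    · push Not at hle
      nlinarith
  rw [Real.dist_eq]
  unfold discHeight
  linarith

/-- The upper envelope over `[0, d]` of the unit discs centred at the points of `U` in the closed
lower half-plane. -/
theorem exists_lower_envelope {U : Set ℂ} {d : ℝ} (hd0 : 0 < d) (hd2 : d < 2)
    (h0 : ∀ u ∈ U, 1 ≤ ‖u - 0‖) (hd : ∀ u ∈ U, 1 ≤ ‖u - d‖) :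
    ∃ f : ℝ → ℝ, ContinuousOn f (Icc 0 d) ∧ ∀ t ∈ Icc 0 d, 0 ≤ f t ∧
      (∀ u ∈ U, u.im ≤ 0 → 1 ≤ ‖(⟨t, f t⟩ : ℂ) - u‖) ∧
      (∀ s, 0 ≤ s → s < f t → ∃ b ∈ U, b.im < 0 ∧ b.re ∈ Icc 0 d ∧ ‖(⟨t, s⟩ : ℂ) - b‖ < 1) := by
  set h := √(1 - d ^ 2 / 4) with hh
  have hpos : 0 < h := Real.sqrt_pos.2 (by nlinarith)
  have hsq : h ^ 2 = 1 - d ^ 2 / 4 := Real.sq_sqrt (by nlinarith)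
  set B : Set ℂ := {b ∈ U | b.im ≤ -h ∧ b.re ∈ Icc 0 d} with hB
  have hBim : ∀ b ∈ B, b.im ≤ 0 := fun b hb => by linarith [hb.2.1]
  set S : ℝ → Set ℝ := fun t => insert 0 ((fun b => discHeight b t) '' B) with hS
  have hbdd : ∀ t, BddAbove (S t) := by
    refine fun t => ⟨1, ?_⟩
    rintro _ (rfl | ⟨b, hb, rfl⟩)
    · exact zero_le_one
    · exact discHeight_le_one (hBim b hb) t
  have hne : ∀ t, (S t).Nonempty := fun t => ⟨0, mem_insert _ _⟩
  have hnonneg : ∀ t, 0 ≤ sSup (S t) := fun t => le_csSup (hbdd t) (mem_insert _ _)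
  have hle : ∀ t, ∀ b ∈ B, discHeight b t ≤ sSup (S t) := fun t b hb =>
    le_csSup (hbdd t) (mem_insert_of_mem _ ⟨b, hb, rfl⟩)
  refine ⟨fun t => sSup (S t), ?_, fun t ht => ⟨hnonneg t, ?_, ?_⟩⟩
  · refine (LipschitzOnWith.of_le_add_mul' (2 / h) fun t ht t' ht' => ?_).continuousOn
    refine csSup_le (hne t) ?_
    rintro _ (rfl | ⟨b, hb, rfl⟩)
    · exact add_nonneg (hnonneg t') (by positivity)
    · exact (discHeight_le_add hd2 hpos hb.2.1 hb.2.2 ht ht').trans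
        (by linarith [hle t' b hb])
  · intro u hu huim
    by_contra! hlt
    have h1 := h0 u hu
    have h2 := hd u hu
    have hlt' := hlt
    rw [norm_sub_lt_one_iff] at hlt'
    rw [one_le_norm_sub_iff] at h1 h2
    simp only [Complex.zero_re, Complex.zero_im, Complex.ofReal_re, Complex.ofReal_im] at h1 h2 hlt'
    have hbase : (t - u.re) ^ 2 + u.im ^ 2 < 1 := by nlinarith [hnonneg t]
    obtain ⟨ht0, htd⟩ := ht
    have hre0 : 0 ≤ u.re := by
      by_contra! hneg
      nlinarith
    have hred : u.re ≤ d := by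
      by_contra! hneg
      nlinarith
    have him : u.im ≤ -h := by
      by_contra! hgt
      have hlt2 : u.im ^ 2 < h ^ 2 := by nlinarith
      rcases le_total u.re (d / 2) with hr | hr <;> nlinarith
    have huB : u ∈ B := ⟨hu, him, hre0, hred⟩
    exact absurd (hle t u huB) (not_le.2 ((lt_discHeight_iff huim t (hnonneg t)).2 hlt))
  · intro s hs hlt
    obtain ⟨_, (rfl | ⟨b, hb, rfl⟩), hsb⟩ := exists_lt_of_lt_csSup (hne t) hlt
    · exact absurd hsb (not_lt.2 hs)
    · exact ⟨b, hb.1, by linarith [hb.2.1], hb.2.2, (lt_discHeight_iff (hBim b hb) t hs).1 hsb⟩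

/-- The part of a unit disc above `[0, d]`, centred below and avoiding `0` and `d`, lies within
distance `d` of `0` and of `d`. -/
theorem sq_add_sq_le_of_norm_sub_lt_one {d t s : ℝ} (hs : 0 ≤ s) {b : ℂ}
    (hb0 : 1 ≤ ‖b - 0‖) (hbd : 1 ≤ ‖b - d‖)
    (hbim : b.im < 0) (hbre : b.re ∈ Icc 0 d) (hb : ‖(⟨t, s⟩ : ℂ) - b‖ < 1) :
    t ^ 2 + s ^ 2 ≤ d ^ 2 ∧ (t - d) ^ 2 + s ^ 2 ≤ d ^ 2 := by
  rw [one_le_norm_sub_iff] at hb0 hbd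
  rw [norm_sub_lt_one_iff] at hb
  simp only [Complex.zero_re, Complex.zero_im, Complex.ofReal_re, Complex.ofReal_im] at hb0 hbd hb
  obtain ⟨h1, h2⟩ := hbre
  have hw : (t - b.re) ^ 2 + s ^ 2 ≤ 1 - b.im ^ 2 := by nlinarith
  constructor
  · have ht : t - b.re ≤ d - b.re := abs_le_of_sq_le_sq' (by nlinarith) (by linarith) |>.2
    nlinarith
  · have ht : -b.re ≤ t - b.re := abs_le_of_sq_le_sq' (by nlinarith) (by linarith) |>.1
    nlinarith

/-- Points of `U` on either side of the real line never share an open unit disc centred above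
`[0, d]`. -/
theorem not_both_sides {U C : Set ℂ} (hU : IsPreconnected U) (hC : IsPreconnected C) {d : ℝ}
    (hd0 : 0 < d) (hd2 : d < 2) (h0C : (0 : ℂ) ∈ C) (hdC : (d : ℂ) ∈ C)
    (hsep : ∀ z ∈ C, ∀ u ∈ U, 1 ≤ ‖u - z‖) {t s : ℝ} (ht : t ∈ Icc 0 d) (hs : 0 ≤ s) {b c : ℂ}
    (hb : b ∈ U) (hc : c ∈ U) (hbim : b.im < 0) (hbre : b.re ∈ Icc 0 d) (hcim : 0 < c.im)
    (hbq : ‖(⟨t, s⟩ : ℂ) - b‖ < 1) (hcq : ‖(⟨t, s⟩ : ℂ) - c‖ < 1) : False := by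
  refine not_crossing hU hC hd0 hd2 h0C hdC hsep hb hc hbim hcim ?_ fun m hm =>
    crossing_between ht hs (hsep 0 h0C b hb) (hsep d hdC b hb) (hsep 0 h0C c hc) (hsep d hdC c hc)
      hbim hbre hbq hcq hm
  have := norm_sub_le_norm_sub_add_norm_sub b ⟨t, s⟩ c
  rw [norm_sub_rev b ⟨t, s⟩] at this
  linarith

/-- The envelope of the discs centred below the real line is free wherever it is positive. -/
theorem exists_free_lower_envelope {U C : Set ℂ} (hU : IsPreconnected U) (hC : IsPreconnected C)
    {d : ℝ} (hd0 : 0 < d) (hd2 : d < 2) (h0C : (0 : ℂ) ∈ C) (hdC : (d : ℂ) ∈ C)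
    (hsep : ∀ z ∈ C, ∀ u ∈ U, 1 ≤ ‖u - z‖) :
    ∃ f : ℝ → ℝ, ContinuousOn f (Icc 0 d) ∧ ∀ t ∈ Icc 0 d, 0 ≤ f t ∧
      (∀ u ∈ U, u.im ≤ 0 → 1 ≤ ‖(⟨t, f t⟩ : ℂ) - u‖) ∧
      (0 < f t → (∀ u ∈ U, 1 ≤ ‖(⟨t, f t⟩ : ℂ) - u‖) ∧
        ∃ b ∈ U, b.im < 0 ∧ b.re ∈ Icc 0 d ∧ ‖(⟨t, 0⟩ : ℂ) - b‖ < 1) ∧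
      t ^ 2 + f t ^ 2 ≤ d ^ 2 ∧ (t - d) ^ 2 + f t ^ 2 ≤ d ^ 2 := by
  obtain ⟨f, hf, hprop⟩ := exists_lower_envelope hd0 hd2 (hsep 0 h0C) (hsep d hdC)
  refine ⟨f, hf, fun t ht => ?_⟩
  obtain ⟨hf0, hlow, happrox⟩ := hprop t ht
  refine ⟨hf0, hlow, fun hpos => ⟨fun u hu => ?_, happrox 0 le_rfl hpos⟩, ?_⟩
  · by_contra! hlt
    have huim : 0 < u.im := by
      by_contra! h
      exact absurd (hlow u hu h) (not_le.2 hlt)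
    have hcont : Continuous fun s : ℝ => ‖(⟨t, s⟩ : ℂ) - u‖ := by
      have : (fun s : ℝ => ‖(⟨t, s⟩ : ℂ) - u‖) = fun s : ℝ => ‖(t + s * Complex.I : ℂ) - u‖ := by
        funext s
        rw [Complex.mk_eq_add_mul_I]
      rw [this]
      fun_prop
    have hev : ∀ᶠ s in nhdsWithin (f t) (Iio (f t)),
        ‖(⟨t, s⟩ : ℂ) - u‖ < 1 ∧ 0 < s ∧ s < f t := by
      filter_upwards [mem_nhdsWithin_of_mem_nhds (hcont.continuousAt.eventually_lt
        continuousAt_const hlt), mem_nhdsWithin_of_mem_nhds (lt_mem_nhds hpos),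
        self_mem_nhdsWithin] with s h1 h2 h3
      exact ⟨h1, h2, h3⟩
    obtain ⟨s, hsu, hs0, hsf⟩ := hev.exists
    obtain ⟨b, hb, hbim, hbre, hbq⟩ := happrox s hs0.le hsf
    exact not_both_sides hU hC hd0 hd2 h0C hdC hsep ht hs0.le hb hu hbim hbre huim hbq hsu
  · have hbound : ∀ s, 0 ≤ s → s < f t →
        t ^ 2 + s ^ 2 ≤ d ^ 2 ∧ (t - d) ^ 2 + s ^ 2 ≤ d ^ 2 := by
      intro s hs hsf
      obtain ⟨b, hb, hbim, hbre, hbq⟩ := happrox s hs hsf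
      exact sq_add_sq_le_of_norm_sub_lt_one hs (hsep 0 h0C b hb) (hsep d hdC b hb) hbim hbre hbq
    obtain ⟨ht0, htd⟩ := ht
    have hlim : ∀ a : ℝ, 0 ≤ a → (∀ s, 0 ≤ s → s < f t → s ^ 2 ≤ a) → f t ^ 2 ≤ a := by
      intro a ha h
      refine Real.le_sqrt hf0 ha |>.1 (le_of_forall_lt fun s hs => ?_)
      rcases lt_or_ge s 0 with hs0 | hs0
      · exact hs0.trans_le (Real.sqrt_nonneg a)
      · obtain ⟨r, hsr, hrf⟩ := exists_between hs
        exact hsr.trans_le (Real.le_sqrt_of_sq_le (h r (hs0.trans hsr.le) hrf))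
    have h1 := hlim (d ^ 2 - t ^ 2) (by nlinarith) fun s hs hsf => by linarith [(hbound s hs hsf).1]
    have h2 := hlim (d ^ 2 - (t - d) ^ 2) (by nlinarith)
      fun s hs hsf => by linarith [(hbound s hs hsf).2]
    exact ⟨by linarith, by linarith⟩

theorem norm_mk_neg_sub_conj (t s : ℝ) (u : ℂ) :
    ‖(⟨t, -s⟩ : ℂ) - u‖ = ‖(⟨t, s⟩ : ℂ) - starRingEnd ℂ u‖ := by
  rw [← Complex.norm_conj]
  congr 1
  apply Complex.ext <;> simp

/-- A free path between `0` and `d` along the real axis, as the graph of a function. -/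
theorem exists_graph_path {U C : Set ℂ} (hU : IsPreconnected U) (hC : IsPreconnected C) {d : ℝ}
    (hd0 : 0 < d) (hd2 : d < 2) (h0C : (0 : ℂ) ∈ C) (hdC : (d : ℂ) ∈ C)
    (hsep : ∀ z ∈ C, ∀ u ∈ U, 1 ≤ ‖u - z‖) :
    ∃ f : ℝ → ℝ, ContinuousOn f (Icc 0 d) ∧ f 0 = 0 ∧ f d = 0 ∧ ∀ t ∈ Icc 0 d,
      (∀ u ∈ U, 1 ≤ ‖(⟨t, f t⟩ : ℂ) - u‖) ∧
        t ^ 2 + f t ^ 2 ≤ d ^ 2 ∧ (t - d) ^ 2 + f t ^ 2 ≤ d ^ 2 := by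
  obtain ⟨f, hf, hfp⟩ := exists_free_lower_envelope hU hC hd0 hd2 h0C hdC hsep
  obtain ⟨k, hk, hkp⟩ := exists_free_lower_envelope
    (hU.image (starRingEnd ℂ) Complex.continuous_conj.continuousOn)
    (hC.image (starRingEnd ℂ) Complex.continuous_conj.continuousOn) hd0 hd2
    ⟨0, h0C, map_zero _⟩ ⟨d, hdC, Complex.conj_ofReal d⟩ (by
      rintro _ ⟨z, hz, rfl⟩ _ ⟨u, hu, rfl⟩
      rw [← map_sub, Complex.norm_conj]
      exact hsep z hz u hu)
  have hfree : ∀ t ∈ Icc 0 d, (∀ u ∈ U, 1 ≤ ‖(⟨t, f t - k t⟩ : ℂ) - u‖) ∧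
      t ^ 2 + (f t - k t) ^ 2 ≤ d ^ 2 ∧ (t - d) ^ 2 + (f t - k t) ^ 2 ≤ d ^ 2 := by
    intro t ht
    obtain ⟨hf0, hflow, hffree, hfb⟩ := hfp t ht
    obtain ⟨hk0, hklow, hkfree, hkb⟩ := hkp t ht
    rcases hk0.eq_or_lt with hkz | hkpos
    · rw [← hkz, sub_zero]
      refine ⟨fun u hu => ?_, hfb⟩
      rcases hf0.eq_or_lt with hfz | hfpos
      · rcases le_total u.im 0 with huim | huim
        · exact hflow u hu huim
        · have := hklow _ ⟨u, hu, rfl⟩ (by simpa using huim)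
          rwa [← norm_mk_neg_sub_conj, ← hkz, neg_zero, hfz] at this
      · exact (hffree hfpos).1 u hu
    · rcases hf0.eq_or_lt with hfz | hfpos
      · rw [← hfz, zero_sub, neg_sq]
        refine ⟨fun u hu => ?_, hkb⟩
        rw [norm_mk_neg_sub_conj]
        exact (hkfree hkpos).1 _ ⟨u, hu, rfl⟩
      · obtain ⟨b, hb, hbim, hbre, hbq⟩ := (hffree hfpos).2
        obtain ⟨_, ⟨c, hc, rfl⟩, hcim, -, hcq⟩ := (hkfree hkpos).2
        rw [← norm_mk_neg_sub_conj, neg_zero] at hcq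
        exact (not_both_sides hU hC hd0 hd2 h0C hdC hsep ht le_rfl hb hc hbim hbre
          (by simpa using hcim) hbq hcq).elim
  refine ⟨fun t => f t - k t, hf.sub hk, ?_, ?_, hfree⟩
  · have := (hfree 0 ⟨le_rfl, hd0.le⟩).2.2
    refine pow_eq_zero_iff two_ne_zero |>.1 (le_antisymm ?_ (sq_nonneg _))
    linarith
  · have := (hfree d ⟨hd0.le, le_rfl⟩).2.1
    refine pow_eq_zero_iff two_ne_zero |>.1 (le_antisymm ?_ (sq_nonneg _))
    linarith

/-- Any two points of the plane can be moved isometrically to `0` and a point on the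
nonnegative real axis of `ℂ`. -/
theorem exists_isometryEquiv_complex (x y : Plane) :
    ∃ T : Plane ≃ᵢ ℂ, T x = 0 ∧ T y = (dist x y : ℝ) := by
  let φ : Plane ≃ₗᵢ[ℝ] ℂ := Complex.orthonormalBasisOneI.repr.symm
  obtain ⟨a, ha⟩ : ∃ a : Circle, (a : ℂ) * (φ y - φ x) = (‖φ y - φ x‖ : ℝ) := by
    refine ⟨Circle.exp (-(φ y - φ x).arg), ?_⟩
    conv_lhs => rw [← Complex.norm_mul_exp_arg_mul_I (φ y - φ x)]
    rw [Circle.coe_exp, mul_left_comm, ← Complex.exp_add]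
    simp
  refine ⟨(φ.toIsometryEquiv.trans (IsometryEquiv.subRight (φ x))).trans
    (rotation a).toIsometryEquiv, ?_, ?_⟩
  · simp
  · have hnorm : ‖φ y - φ x‖ = dist x y := by
      rw [← map_sub, φ.norm_map, ← dist_eq_norm, dist_comm]
    rw [← hnorm, ← ha]
    simp

/-- For distinct points `x, y` in the same connected component of the free space with
`dist x y < 2`, there is a path from `x` to `y` inside `F ∩ D₂(x) ∩ D₂(y)`. -/
theorem path_within_both_auras (P : SimplePolygon) (x y : Plane)
    (hx : x ∈ P.freeSpace) (hy : y ∈ connectedComponentIn P.freeSpace x)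
    (hxy : x ≠ y) (hdist : dist x y < 2) :
    ∃ π : unitInterval → Plane, Continuous π ∧ π 0 = x ∧ π 1 = y ∧
      ∀ τ, π τ ∈ P.freeSpace ∩ Metric.ball x 2 ∩ Metric.ball y 2 := by
  obtain ⟨T, hTx, hTy⟩ := exists_isometryEquiv_complex x y
  set d := dist x y with hd
  have hd0 : 0 < d := dist_pos.2 hxy
  obtain ⟨f, hf, hf0, hfd, hfree⟩ := exists_graph_path
    (P.isPreconnected_compl_region_s8.image T T.continuous.continuousOn)
    ((isPreconnected_connectedComponentIn (F := P.freeSpace) (x := x)).image T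
      T.continuous.continuousOn)
    hd0 hdist ⟨x, mem_connectedComponentIn hx, hTx⟩ ⟨y, hy, hTy⟩ (by
      rintro _ ⟨z, hz, rfl⟩ _ ⟨u, hu, rfl⟩
      rw [← dist_eq_norm, T.dist_eq, dist_comm]
      exact (P.mem_freeSpace_iff z).1 (connectedComponentIn_subset _ _ hz) u hu)
  have hmem : ∀ τ : unitInterval, d * (τ : ℝ) ∈ Icc 0 d := fun τ =>
    ⟨mul_nonneg hd0.le τ.2.1, mul_le_of_le_one_right hd0.le τ.2.2⟩
  have hcont : Continuous fun τ : unitInterval => f (d * τ) :=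
    hf.comp_continuous (by fun_prop) hmem
  have hT : ∀ (q : ℂ) (z : Plane), dist (T.symm q) z = ‖q - T z‖ := by
    intro q z
    rw [← dist_eq_norm, ← T.dist_eq, T.apply_symm_apply]
  have hsq : ∀ q : ℂ, q.re ^ 2 + q.im ^ 2 ≤ d ^ 2 → ‖q‖ < 2 := by
    intro q hq
    have : ‖q‖ ^ 2 ≤ d ^ 2 := by
      rw [← Complex.normSq_eq_norm_sq, Complex.normSq_apply]
      linarith
    exact (abs_le_of_sq_le_sq' this hd0.le).2.trans_lt hdist
  refine ⟨fun τ => T.symm ⟨d * τ, f (d * τ)⟩, ?_, ?_, ?_, fun τ => ?_⟩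
  · refine T.symm.continuous.comp ?_
    simp only [Complex.mk_eq_add_mul_I]
    exact (Complex.continuous_ofReal.comp (by fun_prop)).add
      ((Complex.continuous_ofReal.comp hcont).mul continuous_const)
  · simp only [Icc.coe_zero, mul_zero, hf0]
    rw [T.symm_apply_eq, hTx]
    rfl
  · simp only [Icc.coe_one, mul_one, hfd]
    rw [T.symm_apply_eq, hTy]
    rfl
  · obtain ⟨h1, h2, h3⟩ := hfree _ (hmem τ)
    refine ⟨⟨(P.mem_freeSpace_iff _).2 fun u hu => ?_, ?_⟩, ?_⟩
    · rw [hT]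
      exact h1 _ ⟨u, hu, rfl⟩
    · rw [mem_ball, hT, hTx, sub_zero]
      exact hsq _ h2
    · rw [mem_ball, hT, hTy]
      refine hsq _ ?_
      simpa using h3
end
end
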